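/- Let G be a group and g ∈ G such that (N): the normal closure of {g} in G is all of G, and (A): the abelianization of G is infinite cyclic, generated by the image of g. Let P = G × Z be the direct product of G with a multiplicatively written infinite cyclic group Z with generator z. Let m, n be positive integers and k an integer with gcd(m, k·n) = 1. Let N be the normal closure in P of the two elements g^m and g^{k·n}·z^n. Then P/N is isomorphic to (ℤ/mℤ) × (ℤ/nℤ). -/

import Mathlib

/-!
In the quotient `Q = P / N` let `x` and `ζ` be the images of `g` and `z`, and put `y = x ^ k * ζ`,
so that the two relators say `x ^ m = 1` and `y ^ n = 1`. The second one gives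
`x ^ (k * n) = ζ ^ (-n)`, which is central because `z` is; as `m` and `k * n` are coprime, `x`
itself is central. A central image of a normal generator of `G` generates the whole image of `G`,
so every element of `Q` is of the form `x ^ i * y ^ j`. Conversely `P` maps to `ℤ/m × ℤ/n` by
`g ↦ (1, 0)` and `z ↦ (-k, 1)`; this kills the relators and sends `x`, `y` to the standard
generators, so it induces an isomorphism on `Q`.
-/

section GroupLemmas

variable {G Q : Type*} [Group G] [Group Q]

theorem map_mem_center_of_surjective {f : G →* Q} (hf : Function.Surjective f) {z : G}
    (hz : z ∈ Subgroup.center G) : f z ∈ Subgroup.center Q := by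
  rw [Subgroup.mem_center_iff] at hz ⊢
  intro q
  obtain ⟨a, rfl⟩ := hf q
  rw [← map_mul, ← map_mul, hz a]

theorem mem_of_zpow_mem_of_isCoprime {H : Subgroup Q} {x : Q} {i j : ℤ} (hi : x ^ i ∈ H)
    (hj : x ^ j ∈ H) (hij : IsCoprime i j) : x ∈ H := by
  obtain ⟨u, v, huv⟩ := hij
  have hx : x = (x ^ i) ^ u * (x ^ j) ^ v := by
    rw [← zpow_mul, ← zpow_mul, ← zpow_add, mul_comm i, mul_comm j, huv, zpow_one]
  rw [hx]
  exact mul_mem (zpow_mem hi u) (zpow_mem hj v)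

theorem normal_of_le_center {H : Subgroup Q} (hH : H ≤ Subgroup.center Q) : H.Normal where
  conj_mem x hx q := by
    rwa [Subgroup.mem_center_iff.mp (hH hx) q, mul_inv_cancel_right]

theorem map_mem_closure_image_of_image_subset_center {S : Set G}
    (hS : Subgroup.normalClosure S = ⊤) {f : G →* Q} (hf : f '' S ⊆ Subgroup.center Q) (a : G) :
    f a ∈ Subgroup.closure (f '' S) := by
  have : (Subgroup.closure (f '' S)).Normal :=
    normal_of_le_center ((Subgroup.closure_le _).mpr hf)
  have hle : Subgroup.normalClosure S ≤ (Subgroup.closure (f '' S)).comap f :=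
    Subgroup.normalClosure_le_normal fun s hs ↦
      Subgroup.subset_closure (Set.mem_image_of_mem f hs)
  exact hle (hS ▸ Subgroup.mem_top a)

theorem bijective_of_map_eq_prod_generators {m n : ℕ} {x y : Q}
    {φ : Q →* Multiplicative (ZMod m) × Multiplicative (ZMod n)}
    (hφx : φ x = (Multiplicative.ofAdd 1, 1)) (hφy : φ y = (1, Multiplicative.ofAdd 1))
    (hx : x ^ m = 1) (hy : y ^ n = 1) (hxy : ∀ q : Q, ∃ i j : ℤ, q = x ^ i * y ^ j) :
    Function.Bijective φ := by
  have hφ (i j : ℤ) :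
      φ (x ^ i * y ^ j) =
        (Multiplicative.ofAdd (i : ZMod m), Multiplicative.ofAdd (j : ZMod n)) := by
    simp [hφx, hφy, ← ofAdd_zsmul]
  constructor
  · rw [injective_iff_map_eq_one]
    intro q hq
    obtain ⟨i, j, rfl⟩ := hxy q
    rw [hφ, Prod.mk_eq_one, ofAdd_eq_one, ofAdd_eq_one, ZMod.intCast_zmod_eq_zero_iff_dvd,
      ZMod.intCast_zmod_eq_zero_iff_dvd] at hq
    obtain ⟨⟨u, rfl⟩, ⟨v, rfl⟩⟩ := hq
    simp [zpow_mul, hx, hy]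
  · rintro ⟨a, b⟩
    obtain ⟨i, hi⟩ := ZMod.intCast_surjective a.toAdd
    obtain ⟨j, hj⟩ := ZMod.intCast_surjective b.toAdd
    exact ⟨x ^ i * y ^ j, by rw [hφ, hi, hj, ofAdd_toAdd, ofAdd_toAdd]⟩

end GroupLemmas

section CentralFactor

variable {G C Q : Type*} [Group G] [CommGroup C] [Group Q] {f : G × C →* Q} {g : G}

theorem map_inr_mem_center (hf : Function.Surjective f) (c : C) :
    f (1, c) ∈ Subgroup.center Q :=
  map_mem_center_of_surjective hf <|
    Subgroup.mem_center_iff.mpr fun _ ↦ Prod.ext (by simp) (mul_comm _ _)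

theorem map_inl_mem_center_of_isCoprime (hf : Function.Surjective f) {i j : ℤ} {c : C}
    (hi : f (g ^ i, 1) = 1) (hj : f (g ^ j, c) = 1) (hij : IsCoprime i j) :
    f (g, 1) ∈ Subgroup.center Q := by
  have hpow (l : ℤ) : f (g, 1) ^ l = f (g ^ l, 1) := by rw [← map_zpow, Prod.pow_mk, one_zpow]
  have hj_inv : f (g, 1) ^ j = f (1, c⁻¹) := by
    rw [hpow, ← mul_one (f (1, c⁻¹)), ← hj, ← map_mul]
    simp
  refine mem_of_zpow_mem_of_isCoprime ?_ ?_ hij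
  · rw [hpow, hi]
    exact one_mem _
  · rw [hj_inv]
    exact map_inr_mem_center hf _

theorem exists_eq_zpow_mul_map_inr (hg : Subgroup.normalClosure {g} = ⊤)
    (hf : Function.Surjective f) (hfg : f (g, 1) ∈ Subgroup.center Q) (q : Q) :
    ∃ (i : ℤ) (c : C), q = f (g, 1) ^ i * f (1, c) := by
  obtain ⟨⟨a, c⟩, rfl⟩ := hf q
  have ha := map_mem_closure_image_of_image_subset_center hg (f := f.comp (.inl G C))
    (by simpa using hfg) a
  rw [Set.image_singleton, ← Subgroup.zpowers_eq_closure] at ha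
  obtain ⟨i, hi⟩ := Subgroup.mem_zpowers_iff.mp ha
  refine ⟨i, c, ?_⟩
  calc f (a, c) = f (a, 1) * f (1, c) := by rw [← map_mul, Prod.mk_mul_mk, mul_one, one_mul]
    _ = f (g, 1) ^ i * f (1, c) := congrArg (· * f (1, c)) hi.symm

end CentralFactor

section TwistedRelators

variable {G Q : Type*} [Group G] [Group Q] {g : G} {m n : ℕ} {k : ℤ}

/-- The relators `g ^ m` and `(g ^ k * z) ^ n` in `G × ⟨z⟩` imposed by `k`-twisted double point
surgery; `⟨z⟩` is encoded as `Multiplicative ℤ` with `z = Multiplicative.ofAdd 1`. -/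
def twistedRelators (g : G) (m n : ℕ) (k : ℤ) : Set (G × Multiplicative ℤ) :=
  {(g ^ (m : ℤ), 1), (g ^ (k * n), Multiplicative.ofAdd (n : ℤ))}

theorem exists_eq_zpow_mul_zpow {f : G × Multiplicative ℤ →* Q}
    (hg : Subgroup.normalClosure {g} = ⊤) (hf : Function.Surjective f)
    (hfg : f (g, 1) ∈ Subgroup.center Q) (k : ℤ) (q : Q) :
    ∃ i j : ℤ, q = f (g, 1) ^ i * f (g ^ k, Multiplicative.ofAdd 1) ^ j := by
  obtain ⟨i, c, rfl⟩ := exists_eq_zpow_mul_map_inr hg hf hfg q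
  refine ⟨i - k * c.toAdd, c.toAdd, ?_⟩
  simp only [← map_zpow, ← map_mul, Prod.pow_mk, Prod.mk_mul_mk, ← zpow_mul, ← zpow_add]
  simp [← ofAdd_zsmul]

/-- The homomorphism `G × ⟨z⟩ → ℤ/m × ℤ/n` that is `σ` into the first factor on `G` and sends `z` to
`(-k, 1)`, the value for which `g ^ k * z ↦ (0, 1)` whenever `σ g = 1`. -/
def twistedHom (σ : G →* Multiplicative (ZMod m)) (n : ℕ) (k : ℤ) :
    G × Multiplicative ℤ →* Multiplicative (ZMod m) × Multiplicative (ZMod n) :=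
  ((MonoidHom.inl _ _).comp σ).coprod
    (zpowersHom _ (Multiplicative.ofAdd (-k : ZMod m), Multiplicative.ofAdd 1))

variable {σ : G →* Multiplicative (ZMod m)}

theorem twistedHom_zpow_ofAdd (n : ℕ) (k : ℤ) (hσ : σ g = Multiplicative.ofAdd 1) (i j : ℤ) :
    twistedHom σ n k (g ^ i, Multiplicative.ofAdd j) =
      (Multiplicative.ofAdd ((i - k * j : ℤ) : ZMod m), Multiplicative.ofAdd (j : ZMod n)) := by
  simp [twistedHom, hσ, ← ofAdd_zsmul, ofAdd_sub, div_eq_mul_inv, mul_comm]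

theorem normalClosure_twistedRelators_le_ker (hσ : σ g = Multiplicative.ofAdd 1) :
    Subgroup.normalClosure (twistedRelators g m n k) ≤ (twistedHom σ n k).ker := by
  refine Subgroup.normalClosure_le_normal ?_
  rintro _ (rfl | rfl)
  · exact (twistedHom_zpow_ofAdd n k hσ m 0).trans (by simp)
  · exact (twistedHom_zpow_ofAdd n k hσ (k * n) n).trans (by simp)

theorem quotient_by_normalClosure_twisted_relators_zm_zn_general
    (hg : Subgroup.normalClosure {g} = ⊤)
    (σ : G →* Multiplicative (ZMod m)) (hσ : σ g = Multiplicative.ofAdd 1)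
    (hmkn : Int.gcd (m : ℤ) (k * n) = 1) :
    Nonempty (((G × Multiplicative ℤ) ⧸ Subgroup.normalClosure (twistedRelators g m n k)) ≃*
      (Multiplicative (ZMod m) × Multiplicative (ZMod n))) := by
  let N := Subgroup.normalClosure (twistedRelators g m n k)
  let π := QuotientGroup.mk' N
  have hπ : Function.Surjective π := QuotientGroup.mk'_surjective N
  have relator_eq_one {p} (hp : p ∈ twistedRelators g m n k) : π p = 1 :=
    (QuotientGroup.eq_one_iff p).mpr (Subgroup.subset_normalClosure hp)
  have relator_m : π (g ^ (m : ℤ), 1) = 1 := relator_eq_one (.inl rfl)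
  have relator_n : π (g ^ (k * n), Multiplicative.ofAdd (n : ℤ)) = 1 := relator_eq_one (.inr rfl)
  have hcenter : π (g, 1) ∈ Subgroup.center _ :=
    map_inl_mem_center_of_isCoprime hπ relator_m relator_n (Int.isCoprime_iff_gcd_eq_one.mpr hmkn)
  let φ := QuotientGroup.lift N (twistedHom σ n k) (normalClosure_twistedRelators_le_ker hσ)
  have hφ : Function.Bijective φ := bijective_of_map_eq_prod_generators
    (x := π (g, 1)) (y := π (g ^ k, Multiplicative.ofAdd 1))
    (by simpa [φ, π] using twistedHom_zpow_ofAdd n k hσ 1 0)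
    (by simpa [φ, π] using twistedHom_zpow_ofAdd n k hσ k 1)
    (by simpa [← map_pow] using relator_m)
    (by simpa [← map_pow, ← ofAdd_nsmul, zpow_mul] using relator_n)
    (exists_eq_zpow_mul_zpow hg hπ hcenter k)
  exact ⟨MulEquiv.ofBijective φ hφ⟩

end TwistedRelators

/-- If `g` normally generates `G` and the abelianization of `G` is
infinite cyclic generated by the image of `g`, `P = G × ℤ` with central generator
`z` of the `ℤ` factor, `m, n` positive integers and `k` an integer with
`gcd(m, k·n) = 1`, and `N` is the normal closure in `P` of `g^m` and `g^{kn}·z^n`,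
then `P/N ≅ ℤ/m × ℤ/n`. -/
theorem quotient_by_normalClosure_twisted_relators_zm_zn
    {G : Type*} [Group G] (g : G)
    (hN : Subgroup.normalClosure ({g} : Set G) = ⊤)
    (hA : ∃ e : Abelianization G ≃* Multiplicative ℤ,
      e (Abelianization.of g) = Multiplicative.ofAdd 1)
    (m n : ℕ) (hm : 0 < m) (hn : 0 < n) (k : ℤ) (hmkn : Int.gcd (m : ℤ) (k * n) = 1) :
    Nonempty (((G × Multiplicative ℤ) ⧸
        Subgroup.normalClosure
          ({((g ^ (m : ℤ), (1 : Multiplicative ℤ)) : G × Multiplicative ℤ),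
            ((g ^ (k * (n : ℤ)), Multiplicative.ofAdd (n : ℤ)) : G × Multiplicative ℤ)} :
            Set (G × Multiplicative ℤ))) ≃*
      (Multiplicative (ZMod m) × Multiplicative (ZMod n))) := by
  obtain ⟨e, he⟩ := hA
  let reduction : Multiplicative ℤ →* Multiplicative (ZMod m) :=
    (Int.castAddHom (ZMod m)).toMultiplicative
  exact quotient_by_normalClosure_twisted_relators_zm_zn_general hN
    (reduction.comp (e.toMonoidHom.comp Abelianization.of)) (by simp [reduction, he]) hmkn
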